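/- Let R be a commutative ring in which 6 is invertible, and let (A,B) be a pair of symmetric 3×3 matrices over R with Δ₄(A,B) a unit of R. Then the R-linear map 𝔤₄(R) → Sym₃(R)² sending (X₃,X₂) to (X₃,X₂)·(A,B) is bijective, where Sym₃(R) denotes the R-module of symmetric 3×3 matrices over R (both source and target are free R-modules of rank 12). -/

import Mathlib

/-- The discriminant of the binary cubic form `a·x³ + b·x²y + c·xy² + d·y³`. -/
def disc3 {R : Type*} [CommRing R] (a b c d : R) : R :=
  b ^ 2 * c ^ 2 - 4 * a * c ^ 3 - 4 * b ^ 3 * d - 27 * a ^ 2 * d ^ 2 + 18 * a * b * c * d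

/-- The binary cubic form `4·det(x·A − y·B)` associated to a pair of 3×3 matrices,
as an element of `R[x][y]` (the inner variable is `x`, the outer variable is `y`). -/
noncomputable def pairCubic {R : Type*} [CommRing R] (A B : Matrix (Fin 3) (Fin 3) R) :
    Polynomial (Polynomial R) :=
  4 * Matrix.det (Matrix.of fun i j =>
    (Polynomial.C (Polynomial.C (A i j) * Polynomial.X) -
      Polynomial.X * Polynomial.C (Polynomial.C (B i j)) : Polynomial (Polynomial R)))

/-- The discriminant `Δ₄(A,B)` of a pair of 3×3 matrices: writing
`4·det(x·A − y·B) = a·x³ + b·x²y + c·xy² + d·y³`, it is `Δ₃(a,b,c,d)`. -/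
noncomputable def disc4 {R : Type*} [CommRing R] (A B : Matrix (Fin 3) (Fin 3) R) : R :=
  disc3 (((pairCubic A B).coeff 0).coeff 3) (((pairCubic A B).coeff 1).coeff 2)
    (((pairCubic A B).coeff 2).coeff 1) (((pairCubic A B).coeff 3).coeff 0)

/-- The Lie algebra action of `𝔤₄(R) = {(X₃,X₂) : tr X₃ = tr X₂}` on pairs of symmetric
3×3 matrices: `(X₃,X₂)·(A,B) = (X₃A + AX₃ᵀ − x₁₁A − x₂₁B, X₃B + BX₃ᵀ − x₁₂A − x₂₂B)`. -/
def lieAct4 {R : Type*} [CommRing R] (X3 : Matrix (Fin 3) (Fin 3) R)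
    (X2 : Matrix (Fin 2) (Fin 2) R) (A B : Matrix (Fin 3) (Fin 3) R) :
    Matrix (Fin 3) (Fin 3) R × Matrix (Fin 3) (Fin 3) R :=
  (X3 * A + A * X3.transpose - X2 0 0 • A - X2 1 0 • B,
   X3 * B + B * X3.transpose - X2 0 1 • A - X2 1 1 • B)

/-- Index set for the entries of a symmetric 3×3 matrix: pairs `(i,j)` with `i ≤ j`.
Functions `SymIdx → R` form a free `R`-module of rank 6, a model of the module of
symmetric 3×3 matrices over `R`. -/
abbrev SymIdx : Type := {ij : Fin 3 × Fin 3 // ij.1 ≤ ij.2}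

/-- The coordinates of (the upper triangle of) a 3×3 matrix. -/
def symOf {R : Type*} (A : Matrix (Fin 3) (Fin 3) R) : SymIdx → R :=
  fun ij => A ij.1.1 ij.1.2

/-! In suitable bases the action map is given by a square matrix, whose determinant is a unit as
soon as it is nonzero at every homomorphism to an algebraically closed field `K`; so it suffices to
prove injectivity over `K`. There, if `(X₃, X₂)` kills `(A, B)`, then `X₂` stabilizes the binary
cubic `det (A - y • B)` infinitesimally, up to a twist by the trace. The matrix of this twisted
`𝔤𝔩₂`-action on a cubic has determinant the discriminant of the cubic, here a unit multiple of `Δ₄`,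
whence `X₂ = 0`. Now `X₃ A` and `X₃ B` are skew-symmetric, and if `X₃ ≠ 0` this forces a member of
rank at most one in the pencil, that is, a double root of the cubic, which is excluded. -/

open Matrix Module Polynomial

section BinaryCubic

variable {R : Type*} [CommRing R]

theorem disc3_shift (a b c d t : R) :
    disc3 (a + b * t + c * t ^ 2 + d * t ^ 3) (b + 2 * c * t + 3 * d * t ^ 2) (c + 3 * d * t) d =
      disc3 a b c d := by
  simp only [disc3]
  ring

/-- The matrix of the infinitesimal action of `𝔤𝔩₂`, twisted by `-2 tr`, on the cubic form
`a·x³ + b·x²y + c·xy² + d·y³`: applied to `![p, q, r, s]` it gives the coefficients of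
`(p·x - q·y)·∂f/∂x - (r·x - s·y)·∂f/∂y - 2(p + s)·f`. -/
def cubicActMatrix (a b c d : R) : Matrix (Fin 4) (Fin 4) R :=
  !![a, 0, -b, -2 * a; 0, -3 * a, -2 * c, -b; -c, -2 * b, -3 * d, 0; -2 * d, -c, 0, d]

theorem det_cubicActMatrix (a b c d : R) : (cubicActMatrix a b c d).det = disc3 a b c d := by
  simp [cubicActMatrix, det_succ_row_zero, Fin.sum_univ_succ, disc3, Fin.succAbove]
  ring

theorem cubicActMatrix_mulVec (a b c d p q r s : R) :
    cubicActMatrix a b c d *ᵥ ![p, q, r, s] =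
      ![a * p - b * r - 2 * a * s, -3 * a * q - 2 * c * r - b * s,
        -c * p - 2 * b * q - 3 * d * r, -2 * d * p - c * q + d * s] := by
  ext i
  fin_cases i <;> simp [cubicActMatrix, mulVec, dotProduct, Fin.sum_univ_four] <;> ring

theorem cubic_coeffs_eq_zero [IsDomain R] [Infinite R] {a b c d : R}
    (h : ∀ y, a + b * y + c * y ^ 2 + d * y ^ 3 = 0) : a = 0 ∧ b = 0 ∧ c = 0 ∧ d = 0 := by
  have hp : (C a + C b * X + C c * X ^ 2 + C d * X ^ 3 : R[X]) = 0 :=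
    Polynomial.funext fun y => by simpa using h y
  have hcoeff (n : ℕ) := congrArg (coeff · n) hp
  exact ⟨by simpa [coeff_X, coeff_C, coeff_X_pow] using hcoeff 0,
    by simpa [coeff_X, coeff_C, coeff_X_pow] using hcoeff 1,
    by simpa [coeff_X, coeff_C, coeff_X_pow] using hcoeff 2,
    by simpa [coeff_X, coeff_C, coeff_X_pow] using hcoeff 3⟩

theorem exists_cubic_ne_zero [IsDomain R] [Infinite R] {a b c d : R} (hd : disc3 a b c d ≠ 0) :
    ∃ y, a + b * y + c * y ^ 2 + d * y ^ 3 ≠ 0 := by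
  by_contra! h
  obtain ⟨rfl, rfl, rfl, rfl⟩ := cubic_coeffs_eq_zero h
  simp [disc3] at hd

theorem eq_zero_of_cubic_stabilizer [IsDomain R] [Infinite R] {a b c d p q r s : R}
    (hd : disc3 a b c d ≠ 0)
    (h : ∀ y, (p - q * y) * (3 * a + 2 * b * y + c * y ^ 2)
      - (r - s * y) * (b + 2 * c * y + 3 * d * y ^ 2)
      = 2 * (p + s) * (a + b * y + c * y ^ 2 + d * y ^ 3)) :
    p = 0 ∧ q = 0 ∧ r = 0 ∧ s = 0 := by
  obtain ⟨h₀, h₁, h₂, h₃⟩ : a * p - b * r - 2 * a * s = 0 ∧ -3 * a * q - 2 * c * r - b * s = 0 ∧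
      -c * p - 2 * b * q - 3 * d * r = 0 ∧ -2 * d * p - c * q + d * s = 0 :=
    cubic_coeffs_eq_zero fun y => by linear_combination h y
  have hv : cubicActMatrix a b c d *ᵥ ![p, q, r, s] = 0 := by
    rw [cubicActMatrix_mulVec, h₀, h₁, h₂, h₃]
    simp
  have hzero := eq_zero_of_mulVec_eq_zero (det_cubicActMatrix a b c d ▸ hd) hv
  exact ⟨congrFun hzero 0, congrFun hzero 1, congrFun hzero 2, congrFun hzero 3⟩

end BinaryCubic

section Pencil

variable {R : Type*} [CommRing R]

theorem det_sub_smul (A B : Matrix (Fin 3) (Fin 3) R) (y : R) :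
    (A - y • B).det = A.det - (A.adjugate * B).trace * y + (B.adjugate * A).trace * y ^ 2
      - B.det * y ^ 3 := by
  simp only [det_fin_three, adjugate_fin_three, trace_fin_three, mul_apply, Fin.sum_univ_three,
    of_apply, cons_val, cons_val_zero, cons_val_one, Matrix.sub_apply, Matrix.smul_apply,
    smul_eq_mul]
  ring

theorem trace_adjugate_sub_smul_mul_right (A B : Matrix (Fin 3) (Fin 3) R) (y : R) :
    ((A - y • B).adjugate * B).trace = (A.adjugate * B).trace - 2 * (B.adjugate * A).trace * y
      + 3 * B.det * y ^ 2 := by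
  simp only [det_fin_three, adjugate_fin_three, trace_fin_three, mul_apply, Fin.sum_univ_three,
    of_apply, cons_val, cons_val_zero, cons_val_one, Matrix.sub_apply, Matrix.smul_apply,
    smul_eq_mul]
  ring

theorem trace_adjugate_mul_self {n : Type*} [Fintype n] [DecidableEq n] (A : Matrix n n R) :
    (A.adjugate * A).trace = Fintype.card n * A.det := by
  rw [adjugate_mul, trace_smul, trace_one, smul_eq_mul, mul_comm]

theorem trace_adjugate_sub_smul_mul_left (A B : Matrix (Fin 3) (Fin 3) R) (y : R) :
    ((A - y • B).adjugate * A).trace = 3 * A.det - 2 * (A.adjugate * B).trace * y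
      + (B.adjugate * A).trace * y ^ 2 := by
  have h := trace_adjugate_mul_self (A - y • B)
  rw [mul_sub, Matrix.mul_smul, trace_sub, trace_smul, smul_eq_mul, Fintype.card_fin,
    trace_adjugate_sub_smul_mul_right, det_sub_smul] at h
  push_cast at h
  linear_combination h

theorem trace_adjugate_mul_sub_smul (A B : Matrix (Fin 3) (Fin 3) R) (y : R) :
    (B.adjugate * (A - y • B)).trace = (B.adjugate * A).trace - 3 * B.det * y := by
  rw [mul_sub, Matrix.mul_smul, trace_sub, trace_smul, smul_eq_mul, trace_adjugate_mul_self,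
    Fintype.card_fin]
  push_cast
  ring

theorem trace_adjugate_mapMatrix_mul_mapMatrix {n S : Type*} [Fintype n] [DecidableEq n]
    [CommRing S] (φ : R →+* S) (A B : Matrix n n R) :
    ((φ.mapMatrix A).adjugate * φ.mapMatrix B).trace = φ (A.adjugate * B).trace := by
  rw [← φ.map_adjugate, ← map_mul]
  exact (AddMonoidHom.map_trace φ.toAddMonoidHom _).symm

theorem pairCubic_eq (A B : Matrix (Fin 3) (Fin 3) R) :
    pairCubic A B = C (C (4 * A.det) * X ^ 3) - C (C (4 * (A.adjugate * B).trace) * X ^ 2) * X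
      + C (C (4 * (B.adjugate * A).trace) * X) * X ^ 2 - C (C (4 * B.det)) * X ^ 3 := by
  let ψ : R →+* R[X][X] := C.comp C
  have hpencil : (of fun i j => C (C (A i j) * X) - X * C (C (B i j))) =
      (C X : R[X][X]) • ψ.mapMatrix A - (X : R[X][X]) • ψ.mapMatrix B := by
    ext1 i j
    simp only [ψ, of_apply, Matrix.sub_apply, Matrix.smul_apply, smul_eq_mul,
      RingHom.mapMatrix_apply, map_apply, RingHom.comp_apply, map_mul]
    ring
  rw [pairCubic, hpencil, det_sub_smul, det_smul, adjugate_smul, Matrix.smul_mul, trace_smul,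
    Matrix.mul_smul, trace_smul, ← ψ.map_det, ← ψ.map_det, trace_adjugate_mapMatrix_mul_mapMatrix,
    trace_adjugate_mapMatrix_mul_mapMatrix]
  simp only [ψ, RingHom.comp_apply, Fintype.card_fin, smul_eq_mul, map_mul, map_pow, map_ofNat]
  ring

theorem disc4_eq (A B : Matrix (Fin 3) (Fin 3) R) :
    disc4 A B = 256 * disc3 A.det (-(A.adjugate * B).trace) (B.adjugate * A).trace (-B.det) := by
  have h : disc4 A B = disc3 (4 * A.det) (-(4 * (A.adjugate * B).trace))
      (4 * (B.adjugate * A).trace) (-(4 * B.det)) := by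
    rw [disc4, pairCubic_eq]
    congr 1 <;> simp [coeff_X, coeff_C, coeff_X_pow, -map_mul]
  rw [h, disc3, disc3]
  ring

theorem two_ne_zero_of_disc4_ne_zero {A B : Matrix (Fin 3) (Fin 3) R} (hd : disc4 A B ≠ 0) :
    (2 : R) ≠ 0 := by
  intro h
  apply hd
  rw [disc4_eq]
  linear_combination
    128 * disc3 A.det (-(A.adjugate * B).trace) (B.adjugate * A).trace (-B.det) * h

theorem disc4_map {S : Type*} [CommRing S] (φ : R →+* S) (A B : Matrix (Fin 3) (Fin 3) R) :
    disc4 (A.map φ) (B.map φ) = φ (disc4 A B) := by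
  rw [← φ.mapMatrix_apply, ← φ.mapMatrix_apply]
  simp only [disc4_eq, disc3, ← φ.map_det, trace_adjugate_mapMatrix_mul_mapMatrix, map_mul,
    map_add, map_sub, map_neg, map_pow, map_ofNat]

theorem disc4_comm (A B : Matrix (Fin 3) (Fin 3) R) : disc4 A B = disc4 B A := by
  simp only [disc4_eq, disc3]
  ring

theorem disc4_sub_smul_left (A B : Matrix (Fin 3) (Fin 3) R) (y : R) :
    disc4 (A - y • B) B = disc4 A B := by
  rw [disc4_eq, disc4_eq, det_sub_smul, trace_adjugate_sub_smul_mul_right,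
    trace_adjugate_mul_sub_smul, ← disc3_shift A.det _ _ _ y]
  congr 2 <;> ring

theorem disc4_eq_zero_of_adjugate_eq_zero {A : Matrix (Fin 3) (Fin 3) R}
    (hA : A.adjugate = 0) (B : Matrix (Fin 3) (Fin 3) R) : disc4 A B = 0 := by
  have hdet : A.det = 0 := by
    simpa [hA] using (congrFun (congrFun (mul_adjugate A) 0) 0).symm
  rw [disc4_eq, hA, hdet, Matrix.zero_mul, trace_zero, disc3]
  ring

theorem exists_det_sub_smul_ne_zero [IsDomain R] [Infinite R] {A B : Matrix (Fin 3) (Fin 3) R}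
    (hd : disc4 A B ≠ 0) : ∃ y : R, (A - y • B).det ≠ 0 := by
  rw [disc4_eq] at hd
  obtain ⟨y, hy⟩ := exists_cubic_ne_zero (right_ne_zero_of_mul hd)
  refine ⟨y, ?_⟩
  rw [det_sub_smul]
  convert hy using 1
  ring

end Pencil

section SkewSymmetric

variable {R : Type*} [CommRing R]

theorem exists_mulVec_eq_crossProduct_of_transpose_eq_neg [NoZeroDivisors R] (h2 : (2 : R) ≠ 0)
    {S : Matrix (Fin 3) (Fin 3) R} (hS : Sᵀ = -S) : ∃ s, ∀ v, S *ᵥ v = s ⨯₃ v := by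
  have hskew (i j : Fin 3) : S j i = -S i j := congrFun (congrFun hS i) j
  have hdiag (i : Fin 3) : S i i = 0 := by
    have h : 2 * S i i = 0 := by linear_combination hskew i i
    exact (mul_eq_zero.1 h).resolve_left h2
  refine ⟨![S 2 1, S 0 2, S 1 0], fun v => ?_⟩
  ext i
  fin_cases i <;>
    simp [mulVec, dotProduct, Fin.sum_univ_three, cross_apply, hdiag, hskew 0 1, hskew 2 0,
      hskew 1 2] <;> ring

theorem adjugate_vecMulVec (u v : Fin 3 → R) : (vecMulVec u v).adjugate = 0 := by
  ext i j
  fin_cases i <;> fin_cases j <;> simp [adjugate_fin_three, vecMulVec_apply] <;> ring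

variable {K : Type*} [Field K]

theorem exists_eq_smul_of_crossProduct_eq_zero {v w : Fin 3 → K} (hv : v ≠ 0)
    (h : v ⨯₃ w = 0) : ∃ c : K, w = c • v := by
  have hdep := mt crossProduct_ne_zero_iff_linearIndependent.2 (not_not.2 h)
  rw [LinearIndependent.pair_iff' hv] at hdep
  push Not at hdep
  exact hdep.imp fun _ hc => hc.symm

theorem adjugate_eq_zero_of_crossProduct_mulVec_eq_zero {P : Matrix (Fin 3) (Fin 3) K}
    {u : Fin 3 → K} (hu : u ≠ 0) (h : ∀ v, u ⨯₃ (P *ᵥ v) = 0) : P.adjugate = 0 := by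
  choose c hc using fun v => exists_eq_smul_of_crossProduct_eq_zero hu (h v)
  have hP : P = vecMulVec u fun j => c (Pi.single j 1) := by
    ext i j
    simpa [vecMulVec_apply, mul_comm] using congrFun (hc (Pi.single j 1)) i
  rw [hP, adjugate_vecMulVec]

-- Write `X * A = a ⨯₃ ·` and `X * B = b ⨯₃ ·`. Both identities force `a = c • b`, so `X` kills
-- `A - c • B`, while `X` has rank two unless `b = 0`: hence `A - c • B` has rank at most one.
theorem eq_zero_of_mul_add_mul_transpose_eq_zero {A B X : Matrix (Fin 3) (Fin 3) K}
    (hA : A.IsSymm) (hB : B.IsSymm) (hdisc : disc4 A B ≠ 0) (hdet : B.det ≠ 0)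
    (hXA : X * A + A * Xᵀ = 0) (hXB : X * B + B * Xᵀ = 0) : X = 0 := by
  have h2 := two_ne_zero_of_disc4_ne_zero hdisc
  have hBdet : IsUnit B.det := hdet.isUnit
  obtain ⟨a, ha⟩ := exists_mulVec_eq_crossProduct_of_transpose_eq_neg h2 (S := X * A)
    (by rw [transpose_mul, hA.eq, eq_neg_of_add_eq_zero_right hXA])
  obtain ⟨b, hb⟩ := exists_mulVec_eq_crossProduct_of_transpose_eq_neg h2 (S := X * B)
    (by rw [transpose_mul, hB.eq, eq_neg_of_add_eq_zero_right hXB])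
  by_contra hX
  have hb0 : b ≠ 0 := by
    rintro rfl
    have hXB0 : X * B = 0 := ext_of_mulVec_single fun j => by
      rw [hb, map_zero, LinearMap.zero_apply, zero_mulVec]
    exact hX (by rw [← mul_nonsing_inv_cancel_right B X hBdet, hXB0, Matrix.zero_mul])
  have hXtb : Xᵀ *ᵥ b = 0 := by
    refine eq_zero_of_mulVec_eq_zero hdet ?_
    rw [mulVec_mulVec, eq_neg_of_add_eq_zero_right hXB, neg_mulVec, hb, cross_self, neg_zero]
  have hab : b ⨯₃ a = 0 := by
    rw [← cross_anticomm, ← ha, eq_neg_of_add_eq_zero_left hXA, neg_mulVec, neg_neg,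
      ← mulVec_mulVec, hXtb, mulVec_zero]
  obtain ⟨c, rfl⟩ := exists_eq_smul_of_crossProduct_eq_zero hb0 hab
  have hker (v : Fin 3 → K) : b ⨯₃ ((B⁻¹ * (A - c • B)) *ᵥ v) = 0 := by
    rw [← hb, mulVec_mulVec, Matrix.mul_assoc, mul_nonsing_inv_cancel_left B _ hBdet, mul_sub,
      sub_mulVec, ha, Matrix.mul_smul, smul_mulVec, hb, LinearMap.map_smul₂, sub_self]
  have hadj : (A - c • B).adjugate = 0 := by
    rw [← mul_nonsing_inv_cancel_left B (A - c • B) hBdet, adjugate_mul_distrib,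
      adjugate_eq_zero_of_crossProduct_mulVec_eq_zero hb0 hker, Matrix.zero_mul]
  exact hdisc (disc4_sub_smul_left A B c ▸ disc4_eq_zero_of_adjugate_eq_zero hadj B)

end SkewSymmetric

section Stabilizer

theorem trace_adjugate_mul_mul_add_mul_transpose {n R : Type*} [Fintype n] [DecidableEq n]
    [CommRing R] (A X : Matrix n n R) :
    (A.adjugate * (X * A + A * Xᵀ)).trace = 2 * X.trace * A.det := by
  rw [mul_add, trace_add, trace_mul_comm, Matrix.mul_assoc, mul_adjugate, ← Matrix.mul_assoc,
    adjugate_mul, Matrix.mul_smul, Matrix.smul_mul, Matrix.mul_one, Matrix.one_mul, trace_smul,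
    trace_smul, trace_transpose, smul_eq_mul]
  ring

theorem mul_sub_smul_add_sub_smul_mul_transpose {n R : Type*} [Fintype n] [CommRing R]
    (A B X : Matrix n n R) (y : R) :
    X * (A - y • B) + (A - y • B) * Xᵀ = (X * A + A * Xᵀ) - y • (X * B + B * Xᵀ) := by
  rw [mul_sub, sub_mul, Matrix.mul_smul, Matrix.smul_mul, smul_add]
  abel

theorem lieAct4_eq_zero_iff {R : Type*} [CommRing R] {A B X3 : Matrix (Fin 3) (Fin 3) R}
    {X2 : Matrix (Fin 2) (Fin 2) R} :
    lieAct4 X3 X2 A B = 0 ↔ X3 * A + A * X3ᵀ = X2 0 0 • A + X2 1 0 • B ∧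
      X3 * B + B * X3ᵀ = X2 0 1 • A + X2 1 1 • B := by
  rw [lieAct4, Prod.mk_eq_zero, sub_sub, sub_sub, sub_eq_zero, sub_eq_zero]

-- Pairing the action on `A - y • B` with its adjugate differentiates the cubic `det (A - y • B)`,
-- so `X2` stabilizes that cubic up to the twist by the trace.
theorem snd_eq_zero_of_lieAct4_eq_zero {R : Type*} [CommRing R] [IsDomain R] [Infinite R]
    {A B X3 : Matrix (Fin 3) (Fin 3) R} {X2 : Matrix (Fin 2) (Fin 2) R}
    (hd : disc4 A B ≠ 0) (htr : X3.trace = X2.trace) (h : lieAct4 X3 X2 A B = 0) : X2 = 0 := by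
  obtain ⟨hA, hB⟩ := lieAct4_eq_zero_iff.1 h
  rw [disc4_eq] at hd
  obtain ⟨h00, h01, h10, h11⟩ := eq_zero_of_cubic_stabilizer
    (p := X2 0 0) (q := X2 0 1) (r := X2 1 0) (s := X2 1 1) (right_ne_zero_of_mul hd) fun y => by
      have hy := trace_adjugate_mul_mul_add_mul_transpose (A - y • B) X3
      rw [mul_sub_smul_add_sub_smul_mul_transpose, hA, hB, htr, trace_fin_two] at hy
      simp only [mul_sub, mul_add, Matrix.mul_smul, trace_sub, trace_add, trace_smul,
        smul_eq_mul, det_sub_smul, trace_adjugate_sub_smul_mul_left,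
        trace_adjugate_sub_smul_mul_right] at hy
      linear_combination hy
  ext i j
  fin_cases i <;> fin_cases j <;> assumption

theorem fst_eq_zero_of_lieAct4_zero_eq_zero {K : Type*} [Field K] [Infinite K]
    {A B X3 : Matrix (Fin 3) (Fin 3) K} (hA : A.IsSymm) (hB : B.IsSymm) (hd : disc4 A B ≠ 0)
    (h : lieAct4 X3 0 A B = 0) : X3 = 0 := by
  obtain ⟨hXA, hXB⟩ : X3 * A + A * X3ᵀ = 0 ∧ X3 * B + B * X3ᵀ = 0 := by
    simpa using lieAct4_eq_zero_iff.1 h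
  obtain ⟨y, hy⟩ := exists_det_sub_smul_ne_zero hd
  refine eq_zero_of_mul_add_mul_transpose_eq_zero hB (hA.sub (hB.smul y)) ?_ hy hXB ?_
  · rwa [disc4_comm, disc4_sub_smul_left]
  · rw [mul_sub_smul_add_sub_smul_mul_transpose, hXA, hXB, smul_zero, sub_zero]

end Stabilizer

section LieAct4Trace

theorem eq_of_symOf_eq {R : Type*} {P Q : Matrix (Fin 3) (Fin 3) R} (hP : P.IsSymm)
    (hQ : Q.IsSymm) (h : symOf P = symOf Q) : P = Q := by
  ext i j
  rcases le_total i j with hij | hij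
  · exact congrFun h ⟨(i, j), hij⟩
  · rw [← hP.apply, ← hQ.apply]
    exact congrFun h ⟨(j, i), hij⟩

theorem isSymm_lieAct4 {R : Type*} [CommRing R] {A B : Matrix (Fin 3) (Fin 3) R} (hA : A.IsSymm)
    (hB : B.IsSymm) (X3 : Matrix (Fin 3) (Fin 3) R) (X2 : Matrix (Fin 2) (Fin 2) R) :
    (lieAct4 X3 X2 A B).1.IsSymm ∧ (lieAct4 X3 X2 A B).2.IsSymm := by
  have hsymm {M : Matrix (Fin 3) (Fin 3) R} (hM : M.IsSymm) : (X3 * M + M * X3ᵀ).IsSymm := by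
    rw [IsSymm, transpose_add, transpose_mul, transpose_mul, transpose_transpose, hM.eq, add_comm]
  exact ⟨((hsymm hA).sub (hA.smul _)).sub (hB.smul _), ((hsymm hB).sub (hA.smul _)).sub (hB.smul _)⟩

/-- The action map of `𝔤₄` on a pair of symmetric matrices, extended to all of `M₃ × M₂` by
recording `tr X₃ - tr X₂` as an extra coordinate. Unlike the trace condition cutting out `𝔤₄`,
this makes both sides free modules with evident bases. -/
def lieAct4Trace {R : Type*} [CommRing R] (A B : Matrix (Fin 3) (Fin 3) R) :
    Matrix (Fin 3) (Fin 3) R × Matrix (Fin 2) (Fin 2) R →ₗ[R]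
      (SymIdx → R) × (SymIdx → R) × R where
  toFun X := (symOf (lieAct4 X.1 X.2 A B).1, symOf (lieAct4 X.1 X.2 A B).2,
    X.1.trace - X.2.trace)
  map_add' X Y := by
    ext <;> simp [symOf, lieAct4, add_mul, mul_add, add_smul] <;> ring
  map_smul' r X := by
    ext <;> simp [symOf, lieAct4, mul_smul, mul_add, mul_sub]

theorem lieAct4Trace_injective {K : Type*} [Field K] [Infinite K]
    {A B : Matrix (Fin 3) (Fin 3) K} (hA : A.IsSymm) (hB : B.IsSymm) (hd : disc4 A B ≠ 0) :
    Function.Injective (lieAct4Trace A B) := by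
  refine (injective_iff_map_eq_zero _).2 fun ⟨X3, X2⟩ hX => ?_
  obtain ⟨h₁, h₂, htr⟩ := Prod.mk_eq_zero.1 hX |>.imp_right Prod.mk_eq_zero.1
  obtain ⟨hsymm₁, hsymm₂⟩ := isSymm_lieAct4 hA hB X3 X2
  have h : lieAct4 X3 X2 A B = 0 :=
    Prod.ext (eq_of_symOf_eq hsymm₁ isSymm_zero h₁) (eq_of_symOf_eq hsymm₂ isSymm_zero h₂)
  obtain rfl := snd_eq_zero_of_lieAct4_eq_zero hd (sub_eq_zero.1 htr) h
  rw [fst_eq_zero_of_lieAct4_zero_eq_zero hA hB hd h, Prod.mk_zero_zero]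

theorem lieAct4Trace_map {R S : Type*} [CommRing R] [CommRing S] (φ : R →+* S)
    (A B X3 : Matrix (Fin 3) (Fin 3) R) (X2 : Matrix (Fin 2) (Fin 2) R) :
    lieAct4Trace (A.map φ) (B.map φ) (X3.map φ, X2.map φ) =
      Prod.map (φ ∘ ·) (Prod.map (φ ∘ ·) φ) (lieAct4Trace A B (X3, X2)) := by
  ext <;> simp [lieAct4Trace, symOf, lieAct4, mul_apply, trace, map_sum]

end LieAct4Trace

section ResidueFields

universe u

theorem isUnit_of_forall_isAlgClosed {R : Type u} [CommRing R] {a : R}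
    (h : ∀ (K : Type u) [Field K] [IsAlgClosed K] (φ : R →+* K), φ a ≠ 0) : IsUnit a := by
  by_contra ha
  obtain ⟨m, _, ham⟩ := exists_max_ideal_of_mem_nonunits ha
  let := Ideal.Quotient.field m
  refine h (AlgebraicClosure (R ⧸ m))
    ((algebraMap (R ⧸ m) (AlgebraicClosure (R ⧸ m))).comp (Ideal.Quotient.mk m)) ?_
  rw [RingHom.comp_apply, Ideal.Quotient.eq_zero_iff_mem.2 ham, map_zero]

theorem toMatrix_map_of_comm {R S M N M' N' ι κ : Type*} [CommRing R] [CommRing S]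
    [AddCommGroup M] [Module R M] [AddCommGroup N] [Module R N]
    [AddCommGroup M'] [Module S M'] [AddCommGroup N'] [Module S N']
    [Fintype ι] [DecidableEq ι] [Finite κ]
    {φ : R →+* S} {b : Basis ι R M} {c : Basis κ R N} {b' : Basis ι S M'} {c' : Basis κ S N'}
    {α : M → M'} {β : N → N'} {f : M →ₗ[R] N} {f' : M' →ₗ[S] N'}
    (hα : ∀ i, α (b i) = b' i) (hβ : ∀ n k, c'.repr (β n) k = φ (c.repr n k))
    (hf : ∀ m, f' (α m) = β (f m)) :
    (LinearMap.toMatrix b c f).map φ = LinearMap.toMatrix b' c' f' := by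
  ext k i
  rw [map_apply, LinearMap.toMatrix_apply, LinearMap.toMatrix_apply, ← hα, hf, hβ]

theorem isUnit_det_toMatrix_of_injective {K V W ι : Type*} [Field K] [AddCommGroup V] [Module K V]
    [AddCommGroup W] [Module K W] [Fintype ι] [DecidableEq ι] (b : Basis ι K V) (c : Basis ι K W)
    {f : V →ₗ[K] W} (hf : Function.Injective f) : IsUnit (LinearMap.toMatrix b c f).det := by
  have := b.finiteDimensional_of_finite
  have := c.finiteDimensional_of_finite
  have hrank : finrank K V = finrank K W := by
    rw [finrank_eq_card_basis b, finrank_eq_card_basis c]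
  exact (f.linearEquivOfInjective hf hrank).isUnit_det b c

end ResidueFields

section Bijective

/-- The indices of the matrix entries in `M₃ × M₂`. -/
abbrev PairIdx : Type := Fin 3 × Fin 3 ⊕ Fin 2 × Fin 2

/-- The basis of `M₃ × M₂` formed by the matrix units. -/
noncomputable def pairBasis (R : Type*) [CommRing R] :
    Basis PairIdx R (Matrix (Fin 3) (Fin 3) R × Matrix (Fin 2) (Fin 2) R) :=
  (stdBasis R (Fin 3) (Fin 3)).prod (stdBasis R (Fin 2) (Fin 2))

/-- The coordinate basis of the target of `lieAct4Trace`, reindexed by an arbitrary bijection so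
that the matrix of `lieAct4Trace` is square. -/
noncomputable def symPairBasis (R : Type*) [CommRing R] :
    Basis PairIdx R ((SymIdx → R) × (SymIdx → R) × R) :=
  ((Pi.basisFun R SymIdx).prod ((Pi.basisFun R SymIdx).prod (Basis.singleton Unit R))).reindex
    (Fintype.equivOfCardEq (by decide))

theorem pairBasis_map {R S : Type*} [CommRing R] [CommRing S] (φ : R →+* S) (i : PairIdx) :
    ((pairBasis R i).1.map φ, (pairBasis R i).2.map φ) = pairBasis S i := by
  rcases i with ⟨i, j⟩ | ⟨i, j⟩ <;> simp [pairBasis, stdBasis_eq_single, map_single]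

theorem symPairBasis_repr_map {R S : Type*} [CommRing R] [CommRing S] (φ : R →+* S)
    (w : (SymIdx → R) × (SymIdx → R) × R) (k : PairIdx) :
    (symPairBasis S).repr (Prod.map (φ ∘ ·) (Prod.map (φ ∘ ·) φ) w) k =
      φ ((symPairBasis R).repr w k) := by
  simp only [symPairBasis, Basis.repr_reindex_apply]
  rcases (Fintype.equivOfCardEq _).symm k with j | j | j <;> simp

theorem toMatrix_lieAct4Trace_map {R S : Type*} [CommRing R] [CommRing S] (φ : R →+* S)
    (A B : Matrix (Fin 3) (Fin 3) R) :
    (LinearMap.toMatrix (pairBasis R) (symPairBasis R) (lieAct4Trace A B)).map φ =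
      LinearMap.toMatrix (pairBasis S) (symPairBasis S) (lieAct4Trace (A.map φ) (B.map φ)) :=
  toMatrix_map_of_comm (pairBasis_map φ) (symPairBasis_repr_map φ)
    fun X => lieAct4Trace_map φ A B X.1 X.2

theorem lieAct4Trace_bijective {R : Type*} [CommRing R] {A B : Matrix (Fin 3) (Fin 3) R}
    (hA : A.IsSymm) (hB : B.IsSymm) (hu : IsUnit (disc4 A B)) :
    Function.Bijective (lieAct4Trace A B) := by
  have hdet : IsUnit (LinearMap.toMatrix (pairBasis R) (symPairBasis R) (lieAct4Trace A B)).det :=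
    isUnit_of_forall_isAlgClosed fun K _ _ φ => by
      have : Infinite K := IsAlgClosed.instInfinite
      have hinj : Function.Injective (lieAct4Trace (A.map φ) (B.map φ)) :=
        lieAct4Trace_injective (hA.map φ) (hB.map φ) (by rw [disc4_map]; exact (hu.map φ).ne_zero)
      rw [φ.map_det, φ.mapMatrix_apply, toMatrix_lieAct4Trace_map]
      exact (isUnit_det_toMatrix_of_injective _ _ hinj).ne_zero
  exact (LinearEquiv.ofIsUnitDet hdet).bijective

end Bijective

theorem lieAct4_bijective_of_isUnit_disc4_general {R : Type*} [CommRing R]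
    (A B : Matrix (Fin 3) (Fin 3) R) (hA : A.IsSymm) (hB : B.IsSymm) (hu : IsUnit (disc4 A B)) :
    Function.Bijective
      (fun X : {Y : Matrix (Fin 3) (Fin 3) R × Matrix (Fin 2) (Fin 2) R //
          Y.1.trace = Y.2.trace} =>
        (symOf (lieAct4 X.1.1 X.1.2 A B).1, symOf (lieAct4 X.1.1 X.1.2 A B).2)) := by
  obtain ⟨hinj, hsurj⟩ := lieAct4Trace_bijective hA hB hu
  constructor
  · intro X Y hXY
    obtain ⟨h₁, h₂⟩ := Prod.mk_inj.1 hXY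
    have htr : X.1.1.trace - X.1.2.trace = Y.1.1.trace - Y.1.2.trace := by
      rw [X.2, Y.2, sub_self, sub_self]
    exact Subtype.ext (hinj (Prod.ext h₁ (Prod.ext h₂ htr)))
  · rintro ⟨u, v⟩
    obtain ⟨Y, hY⟩ := hsurj (u, v, 0)
    obtain ⟨h₁, h₂, htr⟩ := Prod.mk_inj.1 hY |>.imp_right Prod.mk_inj.1
    exact ⟨⟨Y, sub_eq_zero.1 htr⟩, Prod.ext h₁ h₂⟩

/-- If `6` is invertible in a commutative ring `R` and `(A,B)` is a pair of symmetric
3×3 matrices over `R` whose discriminant `Δ₄(A,B)` is a unit, then the Lie algebra action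
map `𝔤₄(R) → Sym₃(R)²`, `(X₃,X₂) ↦ (X₃,X₂)·(A,B)`, is bijective (both sides being free
`R`-modules of rank 12). -/
theorem lieAct4_bijective_of_isUnit_disc4 {R : Type*} [CommRing R]
    (h6 : IsUnit (6 : R)) (A B : Matrix (Fin 3) (Fin 3) R)
    (hA : A.IsSymm) (hB : B.IsSymm) (hu : IsUnit (disc4 A B)) :
    Function.Bijective
      (fun X : {Y : Matrix (Fin 3) (Fin 3) R × Matrix (Fin 2) (Fin 2) R //
          Y.1.trace = Y.2.trace} =>
        (symOf (lieAct4 X.1.1 X.1.2 A B).1, symOf (lieAct4 X.1.1 X.1.2 A B).2)) :=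
  lieAct4_bijective_of_isUnit_disc4_general A B hA hB hu
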